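/- arXiv:1910.05604 — 2 statements merged into one kernel-verified Lean document; each statement's English description precedes it below -/
import Mathlib

section
/- Let M : ℝ² → ℝ be smooth with all partial derivatives up to order 9 square-integrable on ℝ², and let Ω := {x=(x₁,x₂,x₃)∈ℝ³ : x₁ > M(x₂,x₃)}. For every α > 0 there exists a constant C > 0 (depending only on α and M) such that for every continuously differentiable function f : closure(Ω) → ℝ one has ∫_Ω e^{-αx₁} |f(x)|² dx ≤ C ( ∫_Ω |∇f(x)|² dx + ∫_{ℝ²} |f(M(x'),x')|² dx' ), the inequality being understood in [0,∞]. -/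
/- STATEMENT 2: Hardy-type inequality on the perturbed half-space
Ω = {x ∈ ℝ³ : x₁ > M(x₂,x₃)}. -/

noncomputable section

open MeasureTheory Real Set Filter
open scoped ENNReal

abbrev E3 : Type := EuclideanSpace ℝ (Fin 3)
abbrev E2 : Type := EuclideanSpace ℝ (Fin 2)

/-- Projection on the tangential variables `x' = (x₂, x₃)`. -/
def proj2 (x : E3) : E2 := (WithLp.equiv 2 (Fin 2 → ℝ)).symm ![x 1, x 2]

/-- The perturbed half-space `Ω = {x : x₁ > M(x₂,x₃)}`. -/
def Omg (M : E2 → ℝ) : Set E3 := {x : E3 | M (proj2 x) < x 0}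

/-- The boundary point `(M(x'), x')` of `∂Ω` over `x' ∈ ℝ²`. -/
def gph (M : E2 → ℝ) (x' : E2) : E3 := (WithLp.equiv 2 (Fin 3 → ℝ)).symm ![M x', x' 0, x' 1]

/-!
Along a vertical ray the energy `h(t) = e^{-αt} |f(t)|²` satisfies, by Young's inequality,
`h' ≤ -(α/2) h + (2/α) e^{-αt} |f'|²`. Integrating from the boundary upwards bounds `∫ h` by
`(4/α²) ∫ e^{-αt} |f'|²` plus `2/α` times the boundary value of `h`, and integrating over the base
gives a weighted inequality above any upper semicontinuous graph. If `M ≥ m`, the weights on the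
right are at most `e^{-αm}`.

That `M` is bounded is the Sobolev embedding `H^d ⊂ L^∞` on `ℝ^d`, which follows by applying
`|g(a)|² ≤ 2 ∫ (|g|² + |g'|²)` to the derivatives of `M` in each coordinate in turn: every
coordinate integrated out costs one derivative.
-/

section WeightedHardyInequality

variable {F : Type*} [NormedAddCommGroup F] [InnerProductSpace ℝ F]

theorem two_mul_inner_le {α : ℝ} (hα : 0 < α) (v w : F) :
    2 * inner ℝ v w ≤ α / 2 * ‖v‖ ^ 2 + 2 / α * ‖w‖ ^ 2 := by
  have hsq : 0 ≤ α / 2 * (‖v‖ - 2 / α * ‖w‖) ^ 2 := by positivity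
  have hexpand : α / 2 * (‖v‖ - 2 / α * ‖w‖) ^ 2 =
      α / 2 * ‖v‖ ^ 2 + 2 / α * ‖w‖ ^ 2 - 2 * (‖v‖ * ‖w‖) := by
    field_simp
    ring
  linarith [real_inner_le_norm v w]

variable {g g' : ℝ → F} {m α : ℝ}

theorem intervalIntegral_exp_mul_norm_sq_le {T : ℝ} (hα : 0 < α) (hmT : m ≤ T)
    (hg : ContinuousOn g (Icc m T)) (hderiv : ∀ t ∈ Ioo m T, HasDerivAt g (g' t) t)
    (hInt : IntegrableOn (fun t => exp (-α * t) * ‖g' t‖ ^ 2) (Icc m T)) :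
    ∫ t in m..T, exp (-α * t) * ‖g t‖ ^ 2 ≤
      4 / α ^ 2 * (∫ t in m..T, exp (-α * t) * ‖g' t‖ ^ 2) +
        2 / α * (exp (-α * m) * ‖g m‖ ^ 2) := by
  have hcont : ContinuousOn (fun t => exp (-α * t) * ‖g t‖ ^ 2) (Icc m T) := by fun_prop
  have hInt₀ : IntegrableOn (fun t => exp (-α * t) * ‖g t‖ ^ 2) (Icc m T) :=
    hcont.integrableOn_Icc
  have hderiv_energy : ∀ t ∈ Ioo m T, HasDerivAt (fun t => exp (-α * t) * ‖g t‖ ^ 2)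
      (exp (-α * t) * -α * ‖g t‖ ^ 2 + exp (-α * t) * (2 * inner ℝ (g t) (g' t))) t :=
    fun t ht => ((hasDerivAt_const_mul (-α)).exp).mul (hderiv t ht).norm_sq
  have hgrowth : exp (-α * T) * ‖g T‖ ^ 2 - exp (-α * m) * ‖g m‖ ^ 2 ≤
      ∫ t in m..T, (2 / α * (exp (-α * t) * ‖g' t‖ ^ 2) -
        α / 2 * (exp (-α * t) * ‖g t‖ ^ 2)) := by
    refine intervalIntegral.sub_le_integral_of_hasDeriv_right_of_le hmT hcont
      (fun t ht => (hderiv_energy t ht).hasDerivWithinAt)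
      ((hInt.const_mul _).sub (hInt₀.const_mul _)) fun t _ => ?_
    linarith [mul_le_mul_of_nonneg_left (two_mul_inner_le hα (g t) (g' t)) (exp_pos (-α * t)).le]
  rw [← uIcc_of_le hmT] at hInt hInt₀
  rw [intervalIntegral.integral_sub (hInt.intervalIntegrable.const_mul _)
    (hInt₀.intervalIntegrable.const_mul _), intervalIntegral.integral_const_mul,
    intervalIntegral.integral_const_mul] at hgrowth
  have hT : 0 ≤ exp (-α * T) * ‖g T‖ ^ 2 := by positivity
  set I₀ := ∫ t in m..T, exp (-α * t) * ‖g t‖ ^ 2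
  set I₁ := ∫ t in m..T, exp (-α * t) * ‖g' t‖ ^ 2
  calc I₀ = 2 / α * (α / 2 * I₀) := by field_simp
    _ ≤ 2 / α * (2 / α * I₁ + exp (-α * m) * ‖g m‖ ^ 2) := by gcongr; linarith
    _ = _ := by ring

theorem setLIntegral_Ioc_exp_mul_norm_sq_le {T : ℝ} (hα : 0 < α) (hmT : m ≤ T)
    (hg : ContinuousOn g (Icc m T)) (hderiv : ∀ t ∈ Ioo m T, HasDerivAt g (g' t) t)
    (hg' : AEMeasurable (fun t => ‖g' t‖) (volume.restrict (Ioc m T))) :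
    ∫⁻ t in Ioc m T, ENNReal.ofReal (exp (-α * t) * ‖g t‖ ^ 2) ≤
      ENNReal.ofReal (4 / α ^ 2) *
          (∫⁻ t in Ioc m T, ENNReal.ofReal (exp (-α * t) * ‖g' t‖ ^ 2)) +
        ENNReal.ofReal (2 / α) * ENNReal.ofReal (exp (-α * m) * ‖g m‖ ^ 2) := by
  have hnonneg : ∀ u : ℝ → F, 0 ≤ fun t => exp (-α * t) * ‖u t‖ ^ 2 := fun u t => by positivity
  have hmeas : AEStronglyMeasurable (fun t => exp (-α * t) * ‖g' t‖ ^ 2)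
      (volume.restrict (Ioc m T)) :=
    AEMeasurable.aestronglyMeasurable (by fun_prop)
  by_cases htop : ∫⁻ t in Ioc m T, ENNReal.ofReal (exp (-α * t) * ‖g' t‖ ^ 2) = ∞
  · have hα2 : 0 < 4 / α ^ 2 := by positivity
    rw [htop, ENNReal.mul_top (ENNReal.ofReal_pos.2 hα2).ne', top_add]
    exact le_top
  have hInt' : IntegrableOn (fun t => exp (-α * t) * ‖g' t‖ ^ 2) (Ioc m T) :=
    (lintegral_ofReal_ne_top_iff_integrable hmeas (.of_forall (hnonneg g'))).1 htop
  have hInt : IntegrableOn (fun t => exp (-α * t) * ‖g t‖ ^ 2) (Ioc m T) :=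
    (ContinuousOn.integrableOn_Icc (by fun_prop)).mono_set Ioc_subset_Icc_self
  have hreal := intervalIntegral_exp_mul_norm_sq_le hα hmT hg hderiv
    ((integrableOn_Icc_iff_integrableOn_Ioc enorm_ne_top).2 hInt')
  rw [intervalIntegral.integral_of_le hmT, intervalIntegral.integral_of_le hmT] at hreal
  rw [← ofReal_integral_eq_lintegral_ofReal hInt (.of_forall (hnonneg g)),
    ← ofReal_integral_eq_lintegral_ofReal hInt' (.of_forall (hnonneg g')),
    ← ENNReal.ofReal_mul (by positivity), ← ENNReal.ofReal_mul (by positivity),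
    ← ENNReal.ofReal_add
      (mul_nonneg (by positivity) (integral_nonneg (hnonneg g'))) (by positivity)]
  exact ENNReal.ofReal_le_ofReal hreal

theorem setLIntegral_Ioi_le_of_forall_Ioc_le {h : ℝ → ℝ≥0∞} {m : ℝ} {A : ℝ≥0∞}
    (hA : ∀ T, m ≤ T → ∫⁻ t in Ioc m T, h t ≤ A) : ∫⁻ t in Ioi m, h t ≤ A := by
  have hunion : Ioi m = ⋃ n : ℕ, Ioc m (m + n) := by
    ext t
    obtain ⟨n, hn⟩ := exists_nat_ge (t - m)
    simp only [mem_Ioi, mem_iUnion, mem_Ioc, exists_and_left]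
    exact ⟨fun ht => ⟨ht, n, by linarith⟩, And.left⟩
  have hmono : Monotone fun n : ℕ => Ioc m (m + n) := fun i j hij =>
    Ioc_subset_Ioc_right (by gcongr)
  rw [hunion, setLIntegral_iUnion_of_directed h hmono.directed_le]
  exact iSup_le fun n => hA _ (by simp)

theorem setLIntegral_Ioi_exp_mul_norm_sq_le (hα : 0 < α) (hg : ContinuousOn g (Ici m))
    (hderiv : ∀ t ∈ Ioi m, HasDerivAt g (g' t) t)
    (hg' : AEMeasurable (fun t => ‖g' t‖) (volume.restrict (Ioi m))) :
    ∫⁻ t in Ioi m, ENNReal.ofReal (exp (-α * t) * ‖g t‖ ^ 2) ≤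
      ENNReal.ofReal (4 / α ^ 2) *
          (∫⁻ t in Ioi m, ENNReal.ofReal (exp (-α * t) * ‖g' t‖ ^ 2)) +
        ENNReal.ofReal (2 / α) * ENNReal.ofReal (exp (-α * m) * ‖g m‖ ^ 2) := by
  refine setLIntegral_Ioi_le_of_forall_Ioc_le fun T hmT => ?_
  grw [setLIntegral_Ioc_exp_mul_norm_sq_le hα hmT (hg.mono Icc_subset_Ici_self)
    (fun t ht => hderiv t ht.1) (hg'.mono_set Ioc_subset_Ioi_self),
    lintegral_mono_set (Ioc_subset_Ioi_self (a := T) (b := m))]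

end WeightedHardyInequality

section Epigraph

/-- The part of `X × ℝ` lying strictly above the graph of `M`. -/
def strictEpigraph {X : Type*} (M : X → ℝ) : Set (X × ℝ) := {p | M p.1 < p.2}

theorem lintegral_indicator_strictEpigraph {X : Type*} (M : X → ℝ) (G : X × ℝ → ℝ≥0∞) (x : X) :
    ∫⁻ t, (strictEpigraph M).indicator G (x, t) = ∫⁻ t in Ioi (M x), G (x, t) := by
  rw [← lintegral_indicator measurableSet_Ioi]
  rfl

variable {X : Type*} [MeasurableSpace X] {μ : Measure X} {M : X → ℝ}

theorem measurableSet_strictEpigraph (hM : Measurable M) :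
    MeasurableSet (strictEpigraph M) :=
  measurableSet_lt (by fun_prop) (by fun_prop)

theorem setLIntegral_strictEpigraph_le (hM : Measurable M) (G : X × ℝ → ℝ≥0∞) :
    ∫⁻ p in strictEpigraph M, G p ∂μ.prod volume ≤
      ∫⁻ x, (∫⁻ t in Ioi (M x), G (x, t)) ∂μ := by
  rw [← lintegral_indicator (measurableSet_strictEpigraph hM)]
  simpa only [lintegral_indicator_strictEpigraph] using
    lintegral_prod_le (μ := μ) (ν := volume) ((strictEpigraph M).indicator G)

theorem measurable_setLIntegral_Ioi (hM : Measurable M) {G : X × ℝ → ℝ≥0∞} (hG : Measurable G) :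
    Measurable fun x => ∫⁻ t in Ioi (M x), G (x, t) := by
  simpa only [lintegral_indicator_strictEpigraph] using
    (hG.indicator (measurableSet_strictEpigraph hM)).lintegral_prod_right' (ν := volume)

theorem setLIntegral_strictEpigraph (hM : Measurable M) {G : X × ℝ → ℝ≥0∞} (hG : Measurable G) :
    ∫⁻ p in strictEpigraph M, G p ∂μ.prod volume =
      ∫⁻ x, (∫⁻ t in Ioi (M x), G (x, t)) ∂μ := by
  rw [← lintegral_indicator (measurableSet_strictEpigraph hM),
    lintegral_prod _ (hG.indicator (measurableSet_strictEpigraph hM)).aemeasurable]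
  simp only [lintegral_indicator_strictEpigraph]

variable {F : Type*} [NormedAddCommGroup F] [InnerProductSpace ℝ F] {u u' : X × ℝ → F} {α : ℝ}

theorem setLIntegral_strictEpigraph_exp_mul_norm_sq_le (hα : 0 < α) (hM : Measurable M)
    (hu : ∀ x, ContinuousOn (fun t => u (x, t)) (Ici (M x)))
    (hderiv : ∀ x, ∀ t ∈ Ioi (M x), HasDerivAt (fun t => u (x, t)) (u' (x, t)) t)
    (hu' : Measurable fun p => ‖u' p‖) :
    ∫⁻ p in strictEpigraph M, ENNReal.ofReal (exp (-α * p.2) * ‖u p‖ ^ 2) ∂μ.prod volume ≤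
      ENNReal.ofReal (4 / α ^ 2) *
          (∫⁻ p in strictEpigraph M, ENNReal.ofReal (exp (-α * p.2) * ‖u' p‖ ^ 2)
            ∂μ.prod volume) +
        ENNReal.ofReal (2 / α) * ∫⁻ x, ENNReal.ofReal (exp (-α * M x) * ‖u (x, M x)‖ ^ 2) ∂μ := by
  have hmeas : Measurable fun p : X × ℝ => ENNReal.ofReal (exp (-α * p.2) * ‖u' p‖ ^ 2) := by
    fun_prop
  calc
    _ ≤ ∫⁻ x, (∫⁻ t in Ioi (M x), ENNReal.ofReal (exp (-α * t) * ‖u (x, t)‖ ^ 2)) ∂μ :=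
      setLIntegral_strictEpigraph_le hM _
    _ ≤ ∫⁻ x, (ENNReal.ofReal (4 / α ^ 2) *
          (∫⁻ t in Ioi (M x), ENNReal.ofReal (exp (-α * t) * ‖u' (x, t)‖ ^ 2)) +
        ENNReal.ofReal (2 / α) * ENNReal.ofReal (exp (-α * M x) * ‖u (x, M x)‖ ^ 2)) ∂μ :=
      lintegral_mono fun x => setLIntegral_Ioi_exp_mul_norm_sq_le hα (hu x) (hderiv x)
        (hu'.comp measurable_prodMk_left).aemeasurable
    _ = _ := by
      rw [lintegral_add_left ((measurable_setLIntegral_Ioi hM hmeas).const_mul _),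
        lintegral_const_mul' _ _ ENNReal.ofReal_ne_top,
        lintegral_const_mul' _ _ ENNReal.ofReal_ne_top, setLIntegral_strictEpigraph hM hmeas]

end Epigraph

section SobolevEmbedding

theorem sq_lintegral_le_measure_univ_mul {X : Type*} [MeasurableSpace X] {μ : Measure X}
    {h : X → ℝ≥0∞} (hh : AEMeasurable h μ) :
    (∫⁻ x, h x ∂μ) ^ 2 ≤ μ univ * ∫⁻ x, h x ^ 2 ∂μ := by
  have hholder := ENNReal.lintegral_mul_le_Lp_mul_Lq μ Real.HolderConjugate.two_two
    (aemeasurable_const (b := 1)) hh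
  have hsqrt : ∀ a : ℝ≥0∞, (a ^ (1 / 2 : ℝ)) ^ 2 = a := fun a => by
    rw [← ENNReal.rpow_mul_natCast]
    norm_num
  simpa [mul_pow, hsqrt, ← one_div] using pow_le_pow_left' hholder 2

theorem ennreal_add_sq_le (a b : ℝ≥0∞) : (a + b) ^ 2 ≤ 2 * (a ^ 2 + b ^ 2) := by
  have hrpow := ENNReal.rpow_add_le_mul_rpow_add_rpow a b one_le_two
  norm_num at hrpow
  exact hrpow

variable {F : Type*} [NormedAddCommGroup F] [NormedSpace ℝ F]

theorem enorm_sub_sq_le_lintegral_enorm_deriv_sq {g : ℝ → F} (hg : ContDiff ℝ 1 g) {a s : ℝ}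
    (hs : s ∈ Icc a (a + 1)) : ‖g a - g s‖ₑ ^ 2 ≤ ∫⁻ t, ‖deriv g t‖ₑ ^ 2 := by
  have hmeas : AEMeasurable (fun t => ‖deriv g t‖ₑ) (volume.restrict (Icc a s)) :=
    (hg.continuous_deriv le_rfl).enorm.aemeasurable
  have hlength : volume.restrict (Icc a s) univ ≤ 1 := by
    simpa [add_comm] using hs.2
  rw [← enorm_neg, neg_sub]
  grw [enorm_sub_le_lintegral_deriv_of_contDiffOn_Icc hg.contDiffOn hs.1,
    sq_lintegral_le_measure_univ_mul hmeas, hlength, one_mul, setLIntegral_le_lintegral]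

theorem enorm_sq_le_lintegral_enorm_deriv_sq {g : ℝ → F} (hg : ContDiff ℝ 1 g) (a : ℝ) :
    ‖g a‖ₑ ^ 2 ≤ 2 * ∫⁻ t, (‖g t‖ₑ ^ 2 + ‖deriv g t‖ₑ ^ 2) := by
  have hmeas : Measurable fun t => ‖g t‖ₑ ^ 2 := (hg.continuous.enorm.measurable).pow_const 2
  have hpoint : ∀ s ∈ Icc a (a + 1),
      ‖g a‖ₑ ^ 2 ≤ 2 * (‖g s‖ₑ ^ 2 + ∫⁻ t, ‖deriv g t‖ₑ ^ 2) := fun s hs =>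
    calc ‖g a‖ₑ ^ 2 = ‖g s + (g a - g s)‖ₑ ^ 2 := by rw [add_sub_cancel]
      _ ≤ 2 * (‖g s‖ₑ ^ 2 + ‖g a - g s‖ₑ ^ 2) := by
        grw [enorm_add_le, ennreal_add_sq_le]
      _ ≤ _ := by grw [enorm_sub_sq_le_lintegral_enorm_deriv_sq hg hs]
  calc ‖g a‖ₑ ^ 2 = ∫⁻ _ in Icc a (a + 1), ‖g a‖ₑ ^ 2 := by simp
    _ ≤ ∫⁻ s in Icc a (a + 1), 2 * (‖g s‖ₑ ^ 2 + ∫⁻ t, ‖deriv g t‖ₑ ^ 2) :=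
      setLIntegral_mono' measurableSet_Icc hpoint
    _ = 2 * ((∫⁻ s in Icc a (a + 1), ‖g s‖ₑ ^ 2) + ∫⁻ t, ‖deriv g t‖ₑ ^ 2) := by
      rw [lintegral_const_mul' _ _ ENNReal.ofNat_ne_top, lintegral_add_left hmeas]
      simp
    _ ≤ 2 * ((∫⁻ s, ‖g s‖ₑ ^ 2) + ∫⁻ t, ‖deriv g t‖ₑ ^ 2) := by
      grw [setLIntegral_le_lintegral]
    _ = _ := by rw [lintegral_add_left hmeas]

/-- The squared size `∑_{j ≤ k} ‖Dʲu(x)‖²` of the `k`-jet of `u` at `x`, whose integral is the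
square of the Sobolev `Hᵏ` norm. It takes values in `[0, ∞]` so that it can be integrated without
integrability side conditions. -/
def jetNormSq {E : Type*} [NormedAddCommGroup E] [NormedSpace ℝ E] (u : E → F) (k : ℕ) (x : E) :
    ℝ≥0∞ :=
  ∑ j ∈ Finset.range (k + 1), ‖iteratedFDeriv ℝ j u x‖ₑ ^ 2

section NormedSpace

variable {E : Type*} [NormedAddCommGroup E] [NormedSpace ℝ E] {u : E → F} {k : ℕ}

theorem jetNormSq_zero (x : E) : jetNormSq u 0 x = ‖u x‖ₑ ^ 2 := by
  simp [jetNormSq, ← ofReal_norm]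

theorem measurable_enorm_iteratedFDeriv_sq [MeasurableSpace E] [OpensMeasurableSpace E] {j : ℕ}
    (hu : ContDiff ℝ k u) (hj : j ≤ k) : Measurable fun x => ‖iteratedFDeriv ℝ j u x‖ₑ ^ 2 :=
  (hu.continuous_iteratedFDeriv (by exact_mod_cast hj)).enorm.measurable.pow_const 2

theorem measurable_jetNormSq [MeasurableSpace E] [OpensMeasurableSpace E] (hu : ContDiff ℝ k u) :
    Measurable (jetNormSq u k) :=
  Finset.measurable_fun_sum _ fun _ hj =>
    measurable_enorm_iteratedFDeriv_sq hu (Finset.mem_range_succ_iff.1 hj)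

theorem lintegral_jetNormSq_lt_top [MeasurableSpace E] [OpensMeasurableSpace E] {μ : Measure E}
    (hu : ContDiff ℝ k u) (hInt : ∀ j ≤ k, Integrable (fun x => ‖iteratedFDeriv ℝ j u x‖ ^ 2) μ) :
    ∫⁻ x, jetNormSq u k x ∂μ < ∞ := by
  simp only [jetNormSq]
  rw [lintegral_finsetSum _ fun j hj =>
    measurable_enorm_iteratedFDeriv_sq hu (Finset.mem_range_succ_iff.1 hj)]
  refine ENNReal.sum_lt_top.2 fun j hj => ?_
  have hfinite := (hInt j (Finset.mem_range_succ_iff.1 hj)).lintegral_lt_top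
  simpa only [ENNReal.ofReal_pow (norm_nonneg _), ofReal_norm] using hfinite

theorem sum_consecutive_le_two_mul_jetNormSq (x : E) :
    ∑ j ∈ Finset.range (k + 1), (‖iteratedFDeriv ℝ j u x‖ₑ ^ 2 +
      ‖iteratedFDeriv ℝ (j + 1) u x‖ₑ ^ 2) ≤ 2 * jetNormSq u (k + 1) x := by
  rw [Finset.sum_add_distrib, two_mul]
  refine add_le_add ?_ ?_
  · rw [jetNormSq, Finset.sum_range_succ _ (k + 1)]
    exact le_add_right le_rfl
  · rw [jetNormSq, Finset.sum_range_succ' _ (k + 1)]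
    exact le_add_right le_rfl

theorem enorm_deriv_iteratedFDeriv_comp_le {j : ℕ} (hu : ContDiff ℝ (j + 1) u) {c : ℝ → E}
    {v : E} {t : ℝ} (hc : HasDerivAt c v t) (hv : ‖v‖ ≤ 1) :
    ‖deriv (fun t => iteratedFDeriv ℝ j u (c t)) t‖ₑ ≤ ‖iteratedFDeriv ℝ (j + 1) u (c t)‖ₑ := by
  have hdiff : Differentiable ℝ (iteratedFDeriv ℝ j u) :=
    hu.differentiable_iteratedFDeriv (by exact_mod_cast j.lt_succ_self)
  have hderiv := (hdiff (c t)).hasFDerivAt.comp_hasDerivAt t hc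
  rw [← ofReal_norm, ← ofReal_norm, ← norm_fderiv_iteratedFDeriv]
  refine ENNReal.ofReal_le_ofReal ?_
  calc ‖deriv (fun t => iteratedFDeriv ℝ j u (c t)) t‖
      = ‖fderiv ℝ (iteratedFDeriv ℝ j u) (c t) v‖ := congrArg norm hderiv.deriv
    _ ≤ ‖fderiv ℝ (iteratedFDeriv ℝ j u) (c t)‖ * 1 :=
      ContinuousLinearMap.le_of_opNorm_le_of_le _ le_rfl hv
    _ = _ := mul_one _

end NormedSpace

section EuclideanSpace

variable {ι : Type*} [Fintype ι] {u : EuclideanSpace ℝ ι → F} {k : ℕ}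

theorem hasDerivAt_toLp_update [DecidableEq ι] (x : ι → ℝ) (i : ι) (t : ℝ) :
    HasDerivAt (fun t => WithLp.toLp 2 (Function.update x i t)) (EuclideanSpace.single i 1) t :=
  (PiLp.continuousLinearEquiv 2 ℝ fun _ : ι => ℝ).symm.hasFDerivAt.comp_hasDerivAt t
    (hasDerivAt_update x i t)

theorem contDiff_toLp_update [DecidableEq ι] (x : ι → ℝ) (i : ι) :
    ContDiff ℝ 1 fun t => WithLp.toLp 2 (Function.update x i t) :=
  (PiLp.continuousLinearEquiv 2 ℝ fun _ : ι => ℝ).symm.contDiff.comp (contDiff_update 1 x i)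

theorem jetNormSq_le_lintegral_update [DecidableEq ι] (hu : ContDiff ℝ (k + 1) u) (x : ι → ℝ)
    (i : ι) :
    jetNormSq u k (WithLp.toLp 2 x) ≤
      4 * ∫⁻ t, jetNormSq u (k + 1) (WithLp.toLp 2 (Function.update x i t)) := by
  set c : ℝ → EuclideanSpace ℝ ι := fun t => WithLp.toLp 2 (Function.update x i t) with hc
  have hx : c (x i) = WithLp.toLp 2 x := by simp [hc]
  have hmeas : ∀ {j}, j ≤ k + 1 → Measurable fun t => ‖iteratedFDeriv ℝ j u (c t)‖ₑ ^ 2 :=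
    fun hj => (measurable_enorm_iteratedFDeriv_sq (by exact_mod_cast hu) hj).comp
      (contDiff_toLp_update x i).continuous.measurable
  have hline : ∀ j ∈ Finset.range (k + 1), ‖iteratedFDeriv ℝ j u (WithLp.toLp 2 x)‖ₑ ^ 2 ≤
      2 * ∫⁻ t, (‖iteratedFDeriv ℝ j u (c t)‖ₑ ^ 2 + ‖iteratedFDeriv ℝ (j + 1) u (c t)‖ₑ ^ 2) := by
    intro j hj
    have hju : ContDiff ℝ (j + 1) u := hu.of_le (by exact_mod_cast Finset.mem_range.1 hj)
    have hsmooth : ContDiff ℝ 1 fun t => iteratedFDeriv ℝ j u (c t) :=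
      (hju.iteratedFDeriv_right (by rw [add_comm])).comp (contDiff_toLp_update x i)
    rw [← hx]
    refine (enorm_sq_le_lintegral_enorm_deriv_sq hsmooth (x i)).trans ?_
    gcongr with t
    exact enorm_deriv_iteratedFDeriv_comp_le hju (hasDerivAt_toLp_update x i t) (by simp)
  calc jetNormSq u k (WithLp.toLp 2 x)
      ≤ ∑ j ∈ Finset.range (k + 1), 2 * ∫⁻ t, (‖iteratedFDeriv ℝ j u (c t)‖ₑ ^ 2 +
          ‖iteratedFDeriv ℝ (j + 1) u (c t)‖ₑ ^ 2) := Finset.sum_le_sum hline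
    _ = 2 * ∫⁻ t, ∑ j ∈ Finset.range (k + 1), (‖iteratedFDeriv ℝ j u (c t)‖ₑ ^ 2 +
          ‖iteratedFDeriv ℝ (j + 1) u (c t)‖ₑ ^ 2) := by
      rw [← Finset.mul_sum, lintegral_finsetSum]
      intro j hj
      have hjk : j + 1 ≤ k + 1 := Finset.mem_range.1 hj
      exact (hmeas (j.le_succ.trans hjk)).add (hmeas hjk)
    _ ≤ 2 * ∫⁻ t, 2 * jetNormSq u (k + 1) (c t) := by
      gcongr with t
      exact sum_consecutive_le_two_mul_jetNormSq (c t)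
    _ = 4 * ∫⁻ t, jetNormSq u (k + 1) (c t) := by
      rw [lintegral_const_mul' _ _ ENNReal.ofNat_ne_top, ← mul_assoc]
      norm_num

theorem jetNormSq_le_lmarginal [DecidableEq ι] (s : Finset ι) (hu : ContDiff ℝ (k + s.card) u)
    (x : ι → ℝ) :
    jetNormSq u k (WithLp.toLp 2 x) ≤ 4 ^ s.card *
      (∫⋯∫⁻_s, fun y => jetNormSq u (k + s.card) (WithLp.toLp 2 y) ∂fun _ => volume) x := by
  induction s using Finset.induction_on generalizing k x with
  | empty => simp
  | insert i s hi ih =>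
    have hcard : k + (insert i s).card = k + 1 + s.card := by
      rw [Finset.card_insert_of_notMem hi]
      ring
    replace hu : ContDiff ℝ (k + 1 + s.card : ℕ) u := hcard ▸ mod_cast hu
    have hmeas : Measurable fun y : ι → ℝ => jetNormSq u (k + 1 + s.card) (WithLp.toLp 2 y) :=
      (measurable_jetNormSq hu).comp (PiLp.continuous_toLp 2 _).measurable
    rw [hcard, lmarginal_insert _ hmeas hi, Finset.card_insert_of_notMem hi, pow_succ', mul_assoc,
      ← lintegral_const_mul' _ _ (ENNReal.pow_ne_top ENNReal.ofNat_ne_top)]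
    refine (jetNormSq_le_lintegral_update (hu.of_le (by norm_cast; lia)) x i).trans ?_
    gcongr with t
    exact ih (by exact_mod_cast hu) _

theorem enorm_sq_le_lintegral_jetNormSq (hu : ContDiff ℝ (Fintype.card ι) u)
    (x : EuclideanSpace ℝ ι) :
    ‖u x‖ₑ ^ 2 ≤ 4 ^ Fintype.card ι * ∫⁻ y, jetNormSq u (Fintype.card ι) y := by
  classical
  have hmarginal := jetNormSq_le_lmarginal (k := 0) Finset.univ (by simpa using hu) x.ofLp
  rw [jetNormSq_zero, lmarginal_univ, Finset.card_univ, zero_add, ← volume_pi] at hmarginal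
  rwa [← (PiLp.volume_preserving_toLp ι).lintegral_comp (measurable_jetNormSq hu)]

theorem isBounded_range_of_integrable_iteratedFDeriv_sq (hu : ContDiff ℝ (Fintype.card ι) u)
    (hInt : ∀ j ≤ Fintype.card ι, Integrable fun x => ‖iteratedFDeriv ℝ j u x‖ ^ 2) :
    Bornology.IsBounded (range u) := by
  set A := 4 ^ Fintype.card ι * ∫⁻ y, jetNormSq u (Fintype.card ι) y
  have hA : A ≠ ∞ := ENNReal.mul_ne_top (ENNReal.pow_ne_top ENNReal.ofNat_ne_top)
    (lintegral_jetNormSq_lt_top hu hInt).ne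
  have hbound : ∀ x, ‖u x‖ ^ 2 ≤ A.toReal := fun x => by
    simpa using ENNReal.toReal_mono hA (enorm_sq_le_lintegral_jetNormSq hu x)
  exact isBounded_iff_forall_norm_le.2
    ⟨√A.toReal, forall_mem_range.2 fun x => Real.le_sqrt_of_sq_le (hbound x)⟩

end EuclideanSpace

end SobolevEmbedding

section PerturbedHalfSpace

/-- The point of `ℝ³` with tangential part `p.1` and first coordinate `p.2`. -/
def ofBaseHeight (p : E2 × ℝ) : E3 := WithLp.toLp 2 ![p.2, p.1 0, p.1 1]

theorem proj2_ofBaseHeight (p : E2 × ℝ) : proj2 (ofBaseHeight p) = p.1 := by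
  ext i
  fin_cases i <;> rfl

theorem continuous_proj2 : Continuous proj2 :=
  (PiLp.continuous_toLp 2 _).comp <| continuous_pi fun i => by
    fin_cases i
    exacts [(by fun_prop : Continuous fun x : E3 => x 1),
      (by fun_prop : Continuous fun x : E3 => x 2)]

theorem continuous_ofBaseHeight : Continuous ofBaseHeight :=
  (PiLp.continuous_toLp 2 _).comp <| continuous_pi fun i => by
    fin_cases i
    exacts [continuous_snd, (by fun_prop : Continuous fun p : E2 × ℝ => p.1 0),
      (by fun_prop : Continuous fun p : E2 × ℝ => p.1 1)]

theorem leftInverse_ofBaseHeight :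
    Function.LeftInverse (fun x : E3 => (proj2 x, x 0)) ofBaseHeight :=
  fun p => Prod.ext (proj2_ofBaseHeight p) rfl

theorem measurableEmbedding_ofBaseHeight : MeasurableEmbedding ofBaseHeight :=
  continuous_ofBaseHeight.measurableEmbedding leftInverse_ofBaseHeight.injective

theorem measurePreserving_ofBaseHeight : MeasurePreserving ofBaseHeight := by
  have hswap : MeasurePreserving (Prod.swap : E2 × ℝ → ℝ × E2) := Measure.measurePreserving_swap
  have hcoord : MeasurePreserving (Prod.map id WithLp.ofLp : ℝ × E2 → ℝ × (Fin 2 → ℝ)) :=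
    (MeasurePreserving.id volume).prod (PiLp.volume_preserving_ofLp (Fin 2))
  have hcons := (volume_preserving_piFinSuccAbove (fun _ : Fin 3 => ℝ) 0).symm
  convert! (PiLp.volume_preserving_toLp (Fin 3)).comp (hcons.comp (hcoord.comp hswap)) using 1
  ext p i
  fin_cases i <;> rfl

theorem hasDerivAt_ofBaseHeight (x' : E2) (t : ℝ) :
    HasDerivAt (fun t => ofBaseHeight (x', t)) (EuclideanSpace.single 0 1) t := by
  have haffine : (fun t => ofBaseHeight (x', t)) =
      fun t : ℝ => t • EuclideanSpace.single 0 1 + ofBaseHeight (x', 0) := by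
    ext t i
    fin_cases i <;> simp [ofBaseHeight]
  rw [haffine]
  simpa using ((hasDerivAt_id t).smul_const
    (EuclideanSpace.single (0 : Fin 3) (1 : ℝ))).add_const (ofBaseHeight (x', 0))

variable {M : E2 → ℝ}

theorem ofBaseHeight_mem_Omg {p : E2 × ℝ} : ofBaseHeight p ∈ Omg M ↔ M p.1 < p.2 := by
  change M (proj2 (ofBaseHeight p)) < p.2 ↔ M p.1 < p.2
  rw [proj2_ofBaseHeight]

theorem isOpen_Omg (hM : UpperSemicontinuous M) : IsOpen (Omg M) := by
  have hcoord : Continuous fun x : E3 => (proj2 x, x 0) := continuous_proj2.prodMk (by fun_prop)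
  have hclosed := hM.IsClosed_hypograph.preimage hcoord
  convert! hclosed.isOpen_compl using 1
  ext x
  simp [Omg]

theorem ofBaseHeight_mem_closure_Omg {x' : E2} {t : ℝ} (ht : M x' ≤ t) :
    ofBaseHeight (x', t) ∈ closure (Omg M) := by
  have hmaps : MapsTo (fun t => ofBaseHeight (x', t)) (Ioi (M x')) (Omg M) :=
    fun _ ht => ofBaseHeight_mem_Omg.2 (mem_Ioi.1 ht)
  refine hmaps.closure (continuous_ofBaseHeight.comp (by fun_prop)) ?_
  rwa [closure_Ioi]

theorem setLIntegral_Omg_eq_strictEpigraph (M : E2 → ℝ) (G : E3 → ℝ≥0∞) :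
    ∫⁻ x in Omg M, G x = ∫⁻ p in strictEpigraph M, G (ofBaseHeight p) := by
  rw [← measurePreserving_ofBaseHeight.setLIntegral_comp_preimage_emb
    measurableEmbedding_ofBaseHeight]
  congr 2
  ext p
  exact ofBaseHeight_mem_Omg

variable {F : Type*} [NormedAddCommGroup F] [InnerProductSpace ℝ F] [CompleteSpace F]
  {f : E3 → F} {α : ℝ}

theorem setLIntegral_Omg_exp_mul_norm_sq_le (hM : UpperSemicontinuous M) (hα : 0 < α)
    (hcont : ContinuousOn f (closure (Omg M))) (hdiff : DifferentiableOn ℝ f (Omg M)) :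
    ∫⁻ x in Omg M, ENNReal.ofReal (exp (-α * x 0) * ‖f x‖ ^ 2) ≤
      ENNReal.ofReal (4 / α ^ 2) *
          (∫⁻ x in Omg M, ENNReal.ofReal (exp (-α * x 0) * ‖fderiv ℝ f x‖ ^ 2)) +
        ENNReal.ofReal (2 / α) *
          ∫⁻ x', ENNReal.ofReal (exp (-α * M x') * ‖f (gph M x')‖ ^ 2) := by
  have hslice : ∀ x', ContinuousOn (fun t => f (ofBaseHeight (x', t))) (Ici (M x')) := fun x' =>
    hcont.comp (continuous_ofBaseHeight.comp (by fun_prop)).continuousOn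
      fun t ht => ofBaseHeight_mem_closure_Omg ht
  have hderiv : ∀ x', ∀ t ∈ Ioi (M x'), HasDerivAt (fun t => f (ofBaseHeight (x', t)))
      (fderiv ℝ f (ofBaseHeight (x', t)) (EuclideanSpace.single 0 1)) t := fun x' t ht =>
    (hdiff.differentiableAt ((isOpen_Omg hM).mem_nhds
      (ofBaseHeight_mem_Omg.2 (mem_Ioi.1 ht)))).hasFDerivAt.comp_hasDerivAt t
      (hasDerivAt_ofBaseHeight x' t)
  have hmeas : Measurable fun p =>
      ‖fderiv ℝ f (ofBaseHeight p) (EuclideanSpace.single 0 1)‖ := by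
    borelize F
    exact ((measurable_fderiv_apply_const ℝ f _).comp continuous_ofBaseHeight.measurable).norm
  rw [setLIntegral_Omg_eq_strictEpigraph, setLIntegral_Omg_eq_strictEpigraph]
  refine (setLIntegral_strictEpigraph_exp_mul_norm_sq_le (μ := volume) hα hM.measurable hslice
    hderiv hmeas).trans (add_le_add (mul_le_mul_right (lintegral_mono fun p => ?_) _) le_rfl)
  gcongr ENNReal.ofReal (exp _ * ?_ ^ 2)
  simpa using (fderiv ℝ f (ofBaseHeight p)).le_opNorm (EuclideanSpace.single 0 1)

theorem hardy_inequality_general (hM : UpperSemicontinuous M) (hbdd : BddBelow (range M))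
    (hα : 0 < α) :
    ∃ C : ℝ, 0 < C ∧
      ∀ f : E3 → F, ContinuousOn f (closure (Omg M)) → DifferentiableOn ℝ f (Omg M) →
        (∫⁻ x in Omg M, ENNReal.ofReal (exp (-α * x 0) * ‖f x‖ ^ 2)) ≤
          ENNReal.ofReal C *
            ((∫⁻ x in Omg M, ENNReal.ofReal (‖fderiv ℝ f x‖ ^ 2)) +
              ∫⁻ x' : E2, ENNReal.ofReal (‖f (gph M x')‖ ^ 2)) := by
  obtain ⟨m, hm⟩ := hbdd
  have hm' : ∀ x', m ≤ M x' := fun x' => hm (mem_range_self x')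
  have hOmg : ∀ x ∈ Omg M, m ≤ x 0 := fun x hx => (hm' _).trans (le_of_lt hx)
  refine ⟨max (4 / α ^ 2) (2 / α) * exp (-α * m), by positivity, fun f hcont hdiff => ?_⟩
  have hweight : ∀ {t : ℝ} (v : ℝ), m ≤ t → ENNReal.ofReal (exp (-α * t) * v ^ 2) ≤
      ENNReal.ofReal (exp (-α * m)) * ENNReal.ofReal (v ^ 2) := fun v ht => by
    rw [← ENNReal.ofReal_mul (exp_nonneg _)]
    gcongr ENNReal.ofReal (exp ?_ * _)
    nlinarith
  calc
    _ ≤ ENNReal.ofReal (4 / α ^ 2) *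
          (∫⁻ x in Omg M, ENNReal.ofReal (exp (-α * x 0) * ‖fderiv ℝ f x‖ ^ 2)) +
        ENNReal.ofReal (2 / α) *
          ∫⁻ x', ENNReal.ofReal (exp (-α * M x') * ‖f (gph M x')‖ ^ 2) :=
      setLIntegral_Omg_exp_mul_norm_sq_le hM hα hcont hdiff
    _ ≤ ENNReal.ofReal (max (4 / α ^ 2) (2 / α)) * (ENNReal.ofReal (exp (-α * m)) *
          ∫⁻ x in Omg M, ENNReal.ofReal (‖fderiv ℝ f x‖ ^ 2)) +
        ENNReal.ofReal (max (4 / α ^ 2) (2 / α)) * (ENNReal.ofReal (exp (-α * m)) *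
          ∫⁻ x', ENNReal.ofReal (‖f (gph M x')‖ ^ 2)) := by
      simp only [← lintegral_const_mul' (ENNReal.ofReal (exp (-α * m))) _ ENNReal.ofReal_ne_top]
      gcongr ENNReal.ofReal ?_ * ?_ + ENNReal.ofReal ?_ * ?_
      · exact le_max_left _ _
      · exact setLIntegral_mono' (isOpen_Omg hM).measurableSet fun x hx => hweight _ (hOmg x hx)
      · exact le_max_right _ _
      · exact lintegral_mono fun x' => hweight _ (hm' x')
    _ = _ := by
      rw [ENNReal.ofReal_mul (by positivity)]
      ring

end PerturbedHalfSpace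

theorem hardy_inequality (M : E2 → ℝ) (hM : ContDiff ℝ (⊤ : ℕ∞) M)
    (hMint : ∀ j ≤ 9, Integrable fun x' : E2 => ‖iteratedFDeriv ℝ j M x'‖ ^ 2)
    (α : ℝ) (hα : 0 < α) :
    ∃ C : ℝ, 0 < C ∧
      ∀ f : E3 → ℝ, ContDiffOn ℝ 1 f (closure (Omg M)) →
        (∫⁻ x in Omg M, ENNReal.ofReal (Real.exp (-α * x 0) * f x ^ 2)) ≤
          ENNReal.ofReal C *
            ((∫⁻ x in Omg M, ENNReal.ofReal (‖fderiv ℝ f x‖ ^ 2)) +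
              ∫⁻ x' : E2, ENNReal.ofReal (f (gph M x') ^ 2)) := by
  have hbdd : BddBelow (range M) := (isBounded_range_of_integrable_iteratedFDeriv_sq
    (hM.of_le (by exact_mod_cast le_top)) fun j hj => hMint j (hj.trans (by simp))).bddBelow
  obtain ⟨C, hC, hardy⟩ :=
    hardy_inequality_general (F := ℝ) hM.continuous.upperSemicontinuous hbdd hα
  refine ⟨C, hC, fun f hf => ?_⟩
  simpa only [Real.norm_eq_abs, sq_abs] using hardy f hf.continuousOn
    ((hf.differentiableOn one_ne_zero).mono subset_closure)
end
end

section
/- Let M : ℝ² → ℝ be smooth with all partial derivatives up to order 9 square-integrable on ℝ², and let Ω := {x=(x₁,x₂,x₃)∈ℝ³ : x₁ > M(x₂,x₃)}. There exists a constant C > 0 (depending only on M) such that for every twice continuously differentiable g : closure(Ω) → ℝ with ∫_Ω |∇^j g|² dx < ∞ for j = 0,1,2, one has sup_{x∈Ω} |g(x)| ≤ C ( ∑_{j=0}^{2} ∫_Ω |∇^j g|² dx )^{1/2}. -/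
/- STATEMENT 5: Sobolev embedding H²(Ω) ⊂ L^∞(Ω) on the perturbed half-space
Ω = {x ∈ ℝ³ : x₁ > M(x₂,x₃)}. -/

noncomputable section

open MeasureTheory Real Set Filter

/-!
If `h` is of class `C^k` on `[0, 1]`, Taylor's formula at `1` for `(1 - t) ^ k • h t`, whose
derivatives of order less than `k` vanish at `1`, bounds `‖h 0‖` by the integral over `[0, 1]` of
`t ^ (k - 1)` times the derivatives of `h` of order at most `k`. Apply this to `t ↦ g (x + t • v)`
and average over a bounded set of directions `v` of positive measure: by Hölder's inequality and the
substitution `y = x + t • v`, the average of the derivatives at time `t` is at most a constant times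
`t ^ (-d / p)` times their `L^p` norm, `d` being the dimension, and `t ^ (k - 1 - d / p)` is
integrable exactly when `d / p < k`. Hence `‖g x‖` is controlled by the `W^{k,p}` norm of `g` on the
truncated cone swept out by the segments.

In dimension two, with `k = p = 2`, the estimate applied to `∇M` shows that `M` is Lipschitz. Then
every point of `Omg M` is the vertex of a translate, contained in `Omg M`, of one fixed truncated
cone, and the estimate in dimension three, again with `k = p = 2`, gives the embedding.
-/

open Module
open scoped ENNReal NNReal Nat

section OneDimensional

variable {F : Type*} [NormedAddCommGroup F] [NormedSpace ℝ F]

lemma iteratedDerivWithin_const_sub_pow {s : Set ℝ} (hs : UniqueDiffOn ℝ s) (c : ℝ) (m i : ℕ)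
    {t : ℝ} (ht : t ∈ s) :
    iteratedDerivWithin i (fun u : ℝ ↦ (c - u) ^ m) s t =
      (-1) ^ i * (m.descFactorial i * (c - t) ^ (m - i)) := by
  rw [iteratedDerivWithin_eq_iteratedDeriv hs (by fun_prop) ht,
    iteratedDeriv_comp_const_sub i (fun u : ℝ ↦ u ^ m) c]
  simp [iteratedDeriv_pow]

lemma iteratedDerivWithin_const_sub_pow_smul_self {s : Set ℝ} (hs : UniqueDiffOn ℝ s) {c : ℝ}
    (hc : c ∈ s) {m j : ℕ} (hj : j < m) {h : ℝ → F} (hh : ContDiffOn ℝ j h s) :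
    iteratedDerivWithin j ((fun u : ℝ ↦ (c - u) ^ m) • h) s c = 0 := by
  rw [iteratedDerivWithin_smul hc hs (by fun_prop) (hh c hc)]
  refine Finset.sum_eq_zero fun i hi ↦ ?_
  have : m - i ≠ 0 := by grind
  simp [iteratedDerivWithin_const_sub_pow hs c m i hc, this]

lemma abs_choose_mul_iteratedDerivWithin_one_sub_pow_le {m i : ℕ} (hi : i ≤ m) {t : ℝ}
    (ht : t ∈ Icc (0 : ℝ) 1) :
    |m.choose i * iteratedDerivWithin i (fun u : ℝ ↦ (1 - u) ^ m) (Icc 0 1) t| ≤ 2 ^ m * m ! := by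
  have choose_le : (m.choose i : ℝ) ≤ 2 ^ m := mod_cast Nat.choose_le_two_pow m i
  have descFactorial_le : (m.descFactorial i : ℝ) ≤ m ! :=
    mod_cast Nat.le_of_dvd m.factorial_pos ⟨_, by rw [mul_comm, Nat.factorial_mul_descFactorial hi]⟩
  have pow_le_one : |1 - t| ^ (m - i) ≤ 1 :=
    pow_le_one₀ (abs_nonneg _) (abs_le.2 ⟨by linarith [ht.2], by linarith [ht.1]⟩)
  rw [iteratedDerivWithin_const_sub_pow (uniqueDiffOn_Icc one_pos) 1 m i ht]
  calc _ = (m.choose i : ℝ) * (m.descFactorial i * |1 - t| ^ (m - i)) := by simp [abs_mul]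
    _ ≤ 2 ^ m * (m ! * 1) := by gcongr
    _ = 2 ^ m * m ! := by rw [mul_one]

lemma enorm_iteratedDerivWithin_one_sub_pow_smul_le {m : ℕ} {h : ℝ → F}
    (hh : ContDiffOn ℝ m h (Icc 0 1)) {t : ℝ} (ht : t ∈ Icc (0 : ℝ) 1) :
    ‖iteratedDerivWithin m ((fun u : ℝ ↦ (1 - u) ^ m) • h) (Icc 0 1) t‖ₑ ≤
      2 ^ m * m ! * ∑ j ∈ Finset.range (m + 1), ‖iteratedDerivWithin j h (Icc 0 1) t‖ₑ := by
  rw [iteratedDerivWithin_smul ht (uniqueDiffOn_Icc one_pos) (by fun_prop) (hh t ht),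
    ← Finset.sum_flip fun j ↦ ‖iteratedDerivWithin j h (Icc 0 1) t‖ₑ, Finset.mul_sum]
  refine (enorm_sum_le _ _).trans (Finset.sum_le_sum fun i hi ↦ ?_)
  have hi : i ≤ m := Finset.mem_range_succ_iff.1 hi
  rw [← Nat.cast_smul_eq_nsmul ℝ, smul_smul, enorm_smul]
  gcongr
  calc _ = ENNReal.ofReal |_| := Real.enorm_eq_ofReal_abs _
    _ ≤ ENNReal.ofReal (2 ^ m * m !) :=
      ENNReal.ofReal_le_ofReal (abs_choose_mul_iteratedDerivWithin_one_sub_pow_le hi ht)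
    _ = 2 ^ m * m ! := by
      rw [ENNReal.ofReal_mul (by positivity), ENNReal.ofReal_pow (by positivity)]; simp

lemma enorm_le_lintegral_of_iteratedDerivWithin_one_eq_zero [CompleteSpace F] {n : ℕ} {h : ℝ → F}
    (hh : ContDiffOn ℝ (n + 1 : ℕ) h (Icc 0 1))
    (hvanish : ∀ j ≤ n, iteratedDerivWithin j h (Icc 0 1) 1 = 0) :
    ‖h 0‖ₑ ≤ ∫⁻ t in Ioc (0 : ℝ) 1,
      ENNReal.ofReal (t ^ n) * ‖iteratedDerivWithin (n + 1) h (Icc 0 1) t‖ₑ := by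
  have hIcc : uIcc (1 : ℝ) 0 = Icc 0 1 := by rw [uIcc_comm, uIcc_of_le zero_le_one]
  have taylor := taylor_integral_remainder (x₀ := 1) (x := 0) (hIcc ▸ hh)
  have taylorPoly_eq_zero : taylorWithinEval h n (Icc 0 1) 1 0 = 0 := by
    rw [taylor_within_apply]
    exact Finset.sum_eq_zero fun j hj ↦ by rw [hvanish j (by grind), smul_zero]
  rw [hIcc, taylorPoly_eq_zero, sub_zero, intervalIntegral.integral_symm,
    intervalIntegral.integral_of_le zero_le_one] at taylor
  rw [taylor, enorm_neg]
  refine (enorm_integral_le_lintegral_enorm _).trans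
    (setLIntegral_mono' measurableSet_Ioc fun t ht ↦ ?_)
  rw [enorm_smul]
  gcongr
  rw [← ofReal_norm]
  refine ENNReal.ofReal_le_ofReal ?_
  rw [zero_sub, norm_div, norm_pow, norm_neg, Real.norm_of_nonneg ht.1.le, RCLike.norm_natCast]
  exact div_le_self (pow_nonneg ht.1.le n) (mod_cast n.factorial_pos)

lemma enorm_zero_le_lintegral_sum_iteratedDerivWithin [CompleteSpace F] {n : ℕ} {h : ℝ → F}
    (hh : ContDiffOn ℝ (n + 1 : ℕ) h (Icc 0 1)) :
    ‖h 0‖ₑ ≤ 2 ^ (n + 1) * (n + 1)! * ∫⁻ t in Ioc (0 : ℝ) 1, ENNReal.ofReal (t ^ n) *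
      ∑ j ∈ Finset.range (n + 2), ‖iteratedDerivWithin j h (Icc 0 1) t‖ₑ := by
  set ψ : ℝ → F := (fun s : ℝ ↦ (1 - s) ^ (n + 1)) • h
  have hψ_zero : ψ 0 = h 0 := by simp [ψ]
  have hψ_contDiff : ContDiffOn ℝ (n + 1 : ℕ) ψ (Icc 0 1) := ContDiffOn.smul (by fun_prop) hh
  have hψ_vanish : ∀ j ≤ n, iteratedDerivWithin j ψ (Icc 0 1) 1 = 0 := fun j hj ↦
    iteratedDerivWithin_const_sub_pow_smul_self (uniqueDiffOn_Icc one_pos)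
      (right_mem_Icc.2 zero_le_one) (Nat.lt_succ_of_le hj)
      (hh.of_le (mod_cast hj.trans n.le_succ))
  calc ‖h 0‖ₑ
      ≤ ∫⁻ t in Ioc (0 : ℝ) 1,
          ENNReal.ofReal (t ^ n) * ‖iteratedDerivWithin (n + 1) ψ (Icc 0 1) t‖ₑ :=
        hψ_zero ▸ enorm_le_lintegral_of_iteratedDerivWithin_one_eq_zero hψ_contDiff hψ_vanish
    _ ≤ ∫⁻ t in Ioc (0 : ℝ) 1, 2 ^ (n + 1) * (n + 1)! * (ENNReal.ofReal (t ^ n) *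
          ∑ j ∈ Finset.range (n + 2), ‖iteratedDerivWithin j h (Icc 0 1) t‖ₑ) := by
        refine setLIntegral_mono' measurableSet_Ioc fun t ht ↦ ?_
        rw [mul_left_comm]
        gcongr
        exact enorm_iteratedDerivWithin_one_sub_pow_smul_le hh (Ioc_subset_Icc_self ht)
    _ = _ := lintegral_const_mul' _ _ (by finiteness)

end OneDimensional

lemma eLpNorm_two_eq_ofReal_sqrt_integral {α F : Type*} [MeasurableSpace α]
    [NormedAddCommGroup F] {μ : Measure α} {f : α → F} (hf : Integrable (fun y ↦ ‖f y‖ ^ 2) μ) :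
    eLpNorm f 2 μ = ENNReal.ofReal √(∫ y, ‖f y‖ ^ 2 ∂μ) := by
  rw [eLpNorm_eq_lintegral_rpow_enorm_toReal two_ne_zero ENNReal.ofNat_ne_top,
    sqrt_eq_rpow, ← ENNReal.ofReal_rpow_of_nonneg (by positivity) (by positivity),
    ofReal_integral_eq_lintegral_ofReal hf (by filter_upwards with y; positivity)]
  simp [ENNReal.ofReal_pow]

section Jet

variable {E F : Type*} [NormedAddCommGroup E] [NormedSpace ℝ E]
  [NormedAddCommGroup F] [NormedSpace ℝ F]

lemma iteratedDeriv_comp_add_smul {U : Set E} (hU : IsOpen U) {j : ℕ} {g : E → F}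
    (hg : ContDiffOn ℝ j g U) {x v : E} {t : ℝ} (ht : x + t • v ∈ U) :
    iteratedDeriv j (fun s : ℝ ↦ g (x + s • v)) t =
      iteratedFDeriv ℝ j g (x + t • v) fun _ ↦ v := by
  set V : Set E := (x + ·) ⁻¹' U
  set L : ℝ →L[ℝ] E := ContinuousLinearMap.toSpanSingleton ℝ v
  have hV : IsOpen V := hU.preimage (by fun_prop)
  have hgV : ContDiffOn ℝ j (fun y ↦ g (x + y)) V := hg.comp (by fun_prop) fun _ ↦ id
  have hLV : IsOpen (L ⁻¹' V) := hV.preimage L.continuous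
  have htV : L t ∈ V := by simpa [L, V] using ht
  have iteratedFDeriv_comp := L.iteratedFDerivWithin_comp_right hgV hV.uniqueDiffOn
    hLV.uniqueDiffOn htV le_rfl
  rw [iteratedFDerivWithin_of_isOpen _ hLV htV, iteratedFDerivWithin_of_isOpen _ hV htV,
    iteratedFDeriv_comp_add_left] at iteratedFDeriv_comp
  simpa [L, iteratedDeriv] using! DFunLike.congr_fun iteratedFDeriv_comp fun _ ↦ 1

/-- The size of the `k`-jet of `g` at `y`: the sum of the operator norms of its derivatives of order
at most `k`. Its `L^p` norm is a `W^{k,p}` norm of `g`; it takes values in `ℝ≥0∞` so that it can be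
integrated without integrability assumptions. -/
def jetENorm (k : ℕ) (g : E → F) (y : E) : ℝ≥0∞ :=
  ∑ j ∈ Finset.range (k + 1), ‖iteratedFDeriv ℝ j g y‖ₑ

variable {U : Set E} {k : ℕ} {g : E → F}

lemma enorm_iteratedDerivWithin_comp_add_smul_le (hU : IsOpen U) {j : ℕ} (hjk : j ≤ k)
    (hg : ContDiffOn ℝ k g U) {x v : E} {t : ℝ} (ht : t ∈ Icc (0 : ℝ) 1) (hmem : x + t • v ∈ U) :
    ‖iteratedDerivWithin j (fun s : ℝ ↦ g (x + s • v)) (Icc 0 1) t‖ₑ ≤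
      (1 + ‖v‖ₑ) ^ k * ‖iteratedFDeriv ℝ j g (x + t • v)‖ₑ := by
  have hgj : ContDiffOn ℝ j g U := hg.of_le (mod_cast hjk)
  have hline : ContDiffAt ℝ j (fun s : ℝ ↦ g (x + s • v)) t :=
    (hgj.contDiffAt (hU.mem_nhds hmem)).comp t (by fun_prop)
  have opNorm_le : ‖iteratedFDeriv ℝ j g (x + t • v) fun _ ↦ v‖ₑ ≤
      ‖iteratedFDeriv ℝ j g (x + t • v)‖ₑ * ‖v‖ₑ ^ j := by
    have := (iteratedFDeriv ℝ j g (x + t • v)).le_opNNNorm fun _ ↦ v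
    rw [Finset.prod_const, Finset.card_univ, Fintype.card_fin] at this
    simp only [enorm_eq_nnnorm]
    exact_mod_cast this
  have pow_le : ‖v‖ₑ ^ j ≤ (1 + ‖v‖ₑ) ^ k :=
    (pow_le_pow_left' le_add_self j).trans (pow_le_pow_right' le_self_add hjk)
  rw [iteratedDerivWithin_eq_iteratedDeriv (uniqueDiffOn_Icc one_pos) hline ht,
    iteratedDeriv_comp_add_smul hU hgj hmem, mul_comm]
  exact opNorm_le.trans (by gcongr)

lemma enorm_le_lintegral_jetENorm_add_smul [CompleteSpace F] {n : ℕ} (hU : IsOpen U)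
    (hg : ContDiffOn ℝ (n + 1 : ℕ) g U) {x v : E} (hseg : ∀ t ∈ Icc (0 : ℝ) 1, x + t • v ∈ U) :
    ‖g x‖ₑ ≤ 2 ^ (n + 1) * (n + 1)! * (1 + ‖v‖ₑ) ^ (n + 1) *
      ∫⁻ t in Ioc (0 : ℝ) 1, ENNReal.ofReal (t ^ n) * jetENorm (n + 1) g (x + t • v) := by
  have hline : ContDiffOn ℝ (n + 1 : ℕ) (fun t : ℝ ↦ g (x + t • v)) (Icc 0 1) :=
    hg.comp (by fun_prop) hseg
  calc ‖g x‖ₑ = ‖g (x + (0 : ℝ) • v)‖ₑ := by rw [zero_smul, add_zero]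
    _ ≤ 2 ^ (n + 1) * (n + 1)! * ∫⁻ t in Ioc (0 : ℝ) 1, ENNReal.ofReal (t ^ n) *
          ∑ j ∈ Finset.range (n + 2),
            ‖iteratedDerivWithin j (fun s : ℝ ↦ g (x + s • v)) (Icc 0 1) t‖ₑ :=
        enorm_zero_le_lintegral_sum_iteratedDerivWithin hline
    _ ≤ 2 ^ (n + 1) * (n + 1)! * ∫⁻ t in Ioc (0 : ℝ) 1, (1 + ‖v‖ₑ) ^ (n + 1) *
          (ENNReal.ofReal (t ^ n) * jetENorm (n + 1) g (x + t • v)) := by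
        refine mul_le_mul' le_rfl (setLIntegral_mono' measurableSet_Ioc fun t ht ↦ ?_)
        rw [mul_left_comm, jetENorm, Finset.mul_sum _ _ ((1 + ‖v‖ₑ) ^ (n + 1))]
        gcongr with j hj
        have ht := Ioc_subset_Icc_self ht
        exact enorm_iteratedDerivWithin_comp_add_smul_le hU (Finset.mem_range_succ_iff.1 hj) hg ht
          (hseg t ht)
    _ = _ := by rw [lintegral_const_mul' _ _ (by finiteness), mul_assoc (2 ^ (n + 1) * _)]

lemma measurable_indicator_jetENorm [MeasurableSpace E] [BorelSpace E] (hU : IsOpen U)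
    (hg : ContDiffOn ℝ k g U) : Measurable (U.indicator (jetENorm k g)) := by
  classical
  have hcont : ContinuousOn (jetENorm k g) U := continuousOn_finsetSum _ fun j hj ↦
    (ContinuousOn.continuousOn_iteratedFDeriv hg hU
      (mod_cast Finset.mem_range_succ_iff.1 hj)).enorm
  rw [← piecewise_eq_indicator]
  exact hcont.measurable_piecewise continuousOn_const hU.measurableSet

lemma eLpNorm_two_jetENorm_le [MeasurableSpace E] [BorelSpace E] {μ : Measure E}
    (hU : IsOpen U) (hg : ContDiffOn ℝ k g U)
    (hL2 : ∀ j ≤ k, IntegrableOn (fun y ↦ ‖iteratedFDeriv ℝ j g y‖ ^ 2) U μ) :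
    eLpNorm (jetENorm k g) 2 (μ.restrict U) ≤ ENNReal.ofReal
      ((k + 1) * √(∑ j ∈ Finset.range (k + 1), ∫ y in U, ‖iteratedFDeriv ℝ j g y‖ ^ 2 ∂μ)) := by
  set I : ℕ → ℝ := fun j ↦ ∫ y in U, ‖iteratedFDeriv ℝ j g y‖ ^ 2 ∂μ
  have meas (j : ℕ) (hj : j ∈ Finset.range (k + 1)) :
      AEStronglyMeasurable (fun y ↦ ‖iteratedFDeriv ℝ j g y‖ₑ) (μ.restrict U) :=
    ((ContinuousOn.continuousOn_iteratedFDeriv hg hU (mod_cast Finset.mem_range_succ_iff.1 hj)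
      ).enorm.aemeasurable hU.measurableSet).aestronglyMeasurable
  have term_le (j : ℕ) (hj : j ∈ Finset.range (k + 1)) :
      eLpNorm (fun y ↦ ‖iteratedFDeriv ℝ j g y‖ₑ) 2 (μ.restrict U) ≤
        ENNReal.ofReal √(∑ i ∈ Finset.range (k + 1), I i) := by
    rw [eLpNorm_enorm,
      eLpNorm_two_eq_ofReal_sqrt_integral (hL2 j (Finset.mem_range_succ_iff.1 hj))]
    gcongr
    exact Finset.single_le_sum (f := I) (fun i _ ↦ integral_nonneg fun _ ↦ sq_nonneg _) hj
  calc eLpNorm (jetENorm k g) 2 (μ.restrict U)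
      = eLpNorm (∑ j ∈ Finset.range (k + 1), fun y ↦ ‖iteratedFDeriv ℝ j g y‖ₑ) 2
          (μ.restrict U) := by
        congr 1
        ext y
        simp [jetENorm]
    _ ≤ ∑ j ∈ Finset.range (k + 1),
          eLpNorm (fun y ↦ ‖iteratedFDeriv ℝ j g y‖ₑ) 2 (μ.restrict U) :=
        eLpNorm_sum_le meas one_le_two
    _ ≤ (k + 1) • ENNReal.ofReal √(∑ i ∈ Finset.range (k + 1), I i) := by
        simpa using Finset.sum_le_card_nsmul _ _ _ term_le
    _ = _ := by
        rw [← ENNReal.ofReal_nsmul, nsmul_eq_mul, Nat.cast_succ]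

end Jet

section Averaging

variable {E : Type*} [NormedAddCommGroup E] [NormedSpace ℝ E] [FiniteDimensional ℝ E]
  [MeasurableSpace E] [BorelSpace E] {μ : Measure E} [μ.IsAddHaarMeasure]

lemma map_add_smul_eq_smul_addHaar (x : E) {t : ℝ} (ht : 0 < t) :
    μ.map (fun v ↦ x + t • v) = ENNReal.ofReal (t ^ (-finrank ℝ E : ℝ)) • μ := by
  have hcomp : (fun v ↦ x + t • v) = (x + ·) ∘ (t • ·) := rfl
  rw [hcomp, ← Measure.map_map (by fun_prop) (by fun_prop), Measure.map_addHaar_smul μ ht.ne',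
    Measure.map_smul, map_add_left_eq_self, rpow_neg ht.le, rpow_natCast,
    abs_of_pos (by positivity)]

lemma eLpNorm_comp_add_smul {ε : Type*} [TopologicalSpace ε] [ContinuousENorm ε] {f : E → ε}
    (hf : AEStronglyMeasurable f μ) (p : ℝ≥0∞) (x : E) {t : ℝ} (ht : 0 < t) :
    eLpNorm (fun v ↦ f (x + t • v)) p μ =
      ENNReal.ofReal (t ^ (-finrank ℝ E / p.toReal : ℝ)) * eLpNorm f p μ := by
  have hmap := map_add_smul_eq_smul_addHaar (μ := μ) x ht
  have hc : ENNReal.ofReal (t ^ (-finrank ℝ E : ℝ)) ≠ 0 := by simpa using by positivity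
  calc eLpNorm (fun v ↦ f (x + t • v)) p μ
      = eLpNorm f p (μ.map fun v ↦ x + t • v) :=
        (eLpNorm_map_measure (hmap ▸ hf.smul_measure _) (by fun_prop)).symm
    _ = ENNReal.ofReal (t ^ (-finrank ℝ E : ℝ)) ^ (1 / p).toReal * eLpNorm f p μ := by
        rw [hmap, eLpNorm_smul_measure_of_ne_zero hc, smul_eq_mul]
    _ = _ := by
        rw [ENNReal.ofReal_rpow_of_pos (by positivity), ← rpow_mul ht.le, one_div,
          ENNReal.toReal_inv, ← div_eq_mul_inv]

lemma setLIntegral_comp_add_smul_le {f : E → ℝ≥0∞} (hf : Measurable f) {p : ℝ≥0∞} (hp : 1 ≤ p)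
    (D : Set E) (x : E) {t : ℝ} (ht : 0 < t) :
    ∫⁻ v in D, f (x + t • v) ∂μ ≤ ENNReal.ofReal (t ^ (-finrank ℝ E / p.toReal : ℝ)) *
      (μ D ^ (1 - 1 / p.toReal) * eLpNorm f p μ) := by
  have meas : Measurable fun v ↦ f (x + t • v) := hf.comp (by fun_prop)
  calc ∫⁻ v in D, f (x + t • v) ∂μ
      = eLpNorm (fun v ↦ f (x + t • v)) 1 (μ.restrict D) := by
        simp [eLpNorm_one_eq_lintegral_enorm]
    _ ≤ eLpNorm (fun v ↦ f (x + t • v)) p (μ.restrict D) * μ D ^ (1 - 1 / p.toReal) := by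
        simpa using eLpNorm_le_eLpNorm_mul_rpow_measure_univ hp
          meas.aestronglyMeasurable (μ := μ.restrict D)
    _ ≤ eLpNorm (fun v ↦ f (x + t • v)) p μ * μ D ^ (1 - 1 / p.toReal) := by
        gcongr
        exact Measure.restrict_le_self
    _ = _ := by
        rw [eLpNorm_comp_add_smul hf.aestronglyMeasurable p x ht]
        ring

lemma setLIntegral_lintegral_comp_add_smul_le {f : E → ℝ≥0∞} (hf : Measurable f) {p : ℝ≥0∞}
    (hp : 1 ≤ p) (D : Set E) (n : ℕ) (x : E) :
    ∫⁻ v in D, (∫⁻ t in Ioc (0 : ℝ) 1, ENNReal.ofReal (t ^ n) * f (x + t • v)) ∂μ ≤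
      (∫⁻ t in Ioc (0 : ℝ) 1, ENNReal.ofReal (t ^ (n - finrank ℝ E / p.toReal : ℝ))) *
        (μ D ^ (1 - 1 / p.toReal) * eLpNorm f p μ) := by
  have meas : Measurable fun q : E × ℝ ↦ ENNReal.ofReal (q.2 ^ n) * f (x + q.2 • q.1) :=
    Measurable.mul (by fun_prop) (hf.comp (by fun_prop))
  rw [lintegral_lintegral_swap meas.aemeasurable, ← lintegral_mul_const _ (by fun_prop)]
  refine setLIntegral_mono' measurableSet_Ioc fun t ht ↦ ?_
  rw [lintegral_const_mul' _ _ (by finiteness)]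
  have hpow : ENNReal.ofReal (t ^ (n - finrank ℝ E / p.toReal : ℝ)) =
      ENNReal.ofReal (t ^ n) * ENNReal.ofReal (t ^ (-finrank ℝ E / p.toReal : ℝ)) := by
    rw [← ENNReal.ofReal_mul (by have := ht.1; positivity), ← rpow_natCast, ← rpow_add ht.1]
    ring_nf
  rw [hpow, mul_assoc]
  gcongr
  exact setLIntegral_comp_add_smul_le hf hp D x ht.1

lemma lintegral_Ioc_rpow_lt_top {a : ℝ} (ha : -1 < a) :
    ∫⁻ t in Ioc (0 : ℝ) 1, ENNReal.ofReal (t ^ a) < ∞ :=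
  ((intervalIntegrable_iff_integrableOn_Ioc_of_le zero_le_one).1
    (intervalIntegral.intervalIntegrable_rpow' ha)).lintegral_lt_top

end Averaging

section Cone

variable {E G F : Type*} [NormedAddCommGroup E] [NormedSpace ℝ E]
  [NormedAddCommGroup G] [NormedSpace ℝ G] [NormedAddCommGroup F] [NormedSpace ℝ F]

/-- The truncated cone with vertex `x`: the union of the segments from `x` to `x + v` for `v ∈ D`.
The uniform cone condition on a domain is stated by fixing `D` and letting `x` vary. -/
def truncatedCone (x : E) (D : Set E) : Set E :=
  image2 (fun (t : ℝ) v ↦ x + t • v) (Icc 0 1) D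

section Sobolev

variable [FiniteDimensional ℝ E] [MeasurableSpace E] [BorelSpace E] {μ : Measure E}
  [μ.IsAddHaarMeasure] [CompleteSpace F] {D : Set E}

lemma measure_mul_enorm_le_of_truncatedCone_subset {n : ℕ} {p : ℝ≥0∞} (hp : 1 ≤ p)
    (hD : MeasurableSet D) {R : ℝ≥0} (hR : ∀ v ∈ D, ‖v‖ₑ ≤ R) {U : Set E} (hU : IsOpen U)
    {g : E → F} (hg : ContDiffOn ℝ (n + 1 : ℕ) g U) {x : E} (hx : truncatedCone x D ⊆ U) :
    μ D * ‖g x‖ₑ ≤ 2 ^ (n + 1) * (n + 1)! * (1 + R) ^ (n + 1) *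
      ((∫⁻ t in Ioc (0 : ℝ) 1, ENNReal.ofReal (t ^ (n - finrank ℝ E / p.toReal : ℝ))) *
        (μ D ^ (1 - 1 / p.toReal) * eLpNorm (jetENorm (n + 1) g) p (μ.restrict U))) := by
  set A : ℝ≥0∞ := 2 ^ (n + 1) * (n + 1)! * (1 + R) ^ (n + 1)
  set f : E → ℝ≥0∞ := U.indicator (jetENorm (n + 1) g) with hf
  have mem_U {v : E} (hv : v ∈ D) {t : ℝ} (ht : t ∈ Icc (0 : ℝ) 1) : x + t • v ∈ U :=
    hx (mem_image2_of_mem ht hv)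
  have segment_bound {v : E} (hv : v ∈ D) :
      ‖g x‖ₑ ≤ A * ∫⁻ t in Ioc (0 : ℝ) 1, ENNReal.ofReal (t ^ n) * f (x + t • v) := by
    refine (enorm_le_lintegral_jetENorm_add_smul hU hg fun t ↦ mem_U hv).trans ?_
    refine mul_le_mul' ?_ ?_
    · simp only [A]
      gcongr
      exact hR v hv
    · refine setLIntegral_mono' measurableSet_Ioc fun t ht ↦ ?_
      rw [hf, indicator_of_mem (mem_U hv (Ioc_subset_Icc_self ht))]
  calc μ D * ‖g x‖ₑ = ∫⁻ _ in D, ‖g x‖ₑ ∂μ := by rw [setLIntegral_const, mul_comm]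
    _ ≤ ∫⁻ v in D, A * (∫⁻ t in Ioc (0 : ℝ) 1, ENNReal.ofReal (t ^ n) * f (x + t • v)) ∂μ :=
        setLIntegral_mono' hD fun v hv ↦ segment_bound hv
    _ = A * ∫⁻ v in D, (∫⁻ t in Ioc (0 : ℝ) 1, ENNReal.ofReal (t ^ n) * f (x + t • v)) ∂μ :=
        lintegral_const_mul' _ _ (by finiteness)
    _ ≤ _ := by
        rw [← eLpNorm_indicator_eq_eLpNorm_restrict hU.measurableSet]
        gcongr
        exact setLIntegral_lintegral_comp_add_smul_le (measurable_indicator_jetENorm hU hg) hp D n x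

/-- For `p = ∞` the quotient `finrank ℝ E / p.toReal` is a division by zero; its value `0` is the
intended one. -/
theorem exists_enorm_le_mul_eLpNorm_jetENorm {k : ℕ} {p : ℝ≥0∞} (hp : 1 ≤ p)
    (hk : finrank ℝ E / p.toReal < k) (hD : MeasurableSet D) (hD_bdd : Bornology.IsBounded D)
    (hD_pos : μ D ≠ 0) :
    ∃ C : ℝ≥0, ∀ U : Set E, IsOpen U → ∀ g : E → F, ContDiffOn ℝ k g U →
      ∀ x, truncatedCone x D ⊆ U → ‖g x‖ₑ ≤ C * eLpNorm (jetENorm k g) p (μ.restrict U) := by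
  obtain ⟨n, rfl⟩ : ∃ n, k = n + 1 := Nat.exists_eq_succ_of_ne_zero fun h ↦ by
    rw [h, Nat.cast_zero] at hk
    exact hk.not_ge (by positivity)
  obtain ⟨R, hR⟩ := hD_bdd.exists_norm_le
  have hR (v : E) (hv : v ∈ D) : ‖v‖ₑ ≤ R.toNNReal := by
    rw [← ofReal_norm]
    exact ENNReal.ofReal_le_ofReal (hR v hv)
  set A : ℝ≥0∞ := 2 ^ (n + 1) * (n + 1)! * (1 + R.toNNReal) ^ (n + 1)
  set J : ℝ≥0∞ :=
    ∫⁻ t in Ioc (0 : ℝ) 1, ENNReal.ofReal (t ^ (n - finrank ℝ E / p.toReal : ℝ))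
  have hJ : J ≠ ∞ := (lintegral_Ioc_rpow_lt_top (by push_cast at hk; linarith)).ne
  have hD_top : μ D ≠ ∞ := hD_bdd.measure_lt_top.ne
  have hpow : μ D ^ (1 - 1 / p.toReal) ≠ ∞ := ENNReal.rpow_ne_top_of_ne_zero hD_pos hD_top
  have hC : (μ D)⁻¹ * (A * (J * μ D ^ (1 - 1 / p.toReal))) ≠ ∞ := by finiteness
  refine ⟨((μ D)⁻¹ * (A * (J * μ D ^ (1 - 1 / p.toReal)))).toNNReal, fun U hU g hg x hx ↦ ?_⟩
  calc ‖g x‖ₑ ≤ (μ D)⁻¹ * (A * (J * (μ D ^ (1 - 1 / p.toReal) *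
          eLpNorm (jetENorm (n + 1) g) p (μ.restrict U)))) :=
        (ENNReal.mul_le_iff_le_inv hD_pos hD_top).1
          (measure_mul_enorm_le_of_truncatedCone_subset hp hD hR hU hg hx)
    _ = _ := by
        rw [ENNReal.coe_toNNReal hC]
        ring

theorem exists_norm_le_mul_sqrt_sum_integral_sq {k : ℕ} (hk : finrank ℝ E < 2 * k)
    (hD : MeasurableSet D) (hD_bdd : Bornology.IsBounded D) (hD_pos : μ D ≠ 0) :
    ∃ C : ℝ, 0 < C ∧ ∀ U : Set E, IsOpen U → ∀ g : E → F, ContDiffOn ℝ k g U →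
      (∀ j ≤ k, IntegrableOn (fun y ↦ ‖iteratedFDeriv ℝ j g y‖ ^ 2) U μ) →
      ∀ x, truncatedCone x D ⊆ U → ‖g x‖ ≤
        C * √(∑ j ∈ Finset.range (k + 1), ∫ y in U, ‖iteratedFDeriv ℝ j g y‖ ^ 2 ∂μ) := by
  have hk' : finrank ℝ E / (2 : ℝ≥0∞).toReal < k := by
    rw [ENNReal.toReal_ofNat, div_lt_iff₀ two_pos, mul_comm]
    exact_mod_cast hk
  obtain ⟨C, hC⟩ := exists_enorm_le_mul_eLpNorm_jetENorm (F := F) one_le_two hk' hD hD_bdd hD_pos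
  refine ⟨(C + 1) * (k + 1), by positivity, fun U hU g hg hL2 x hx ↦ ?_⟩
  set S : ℝ := √(∑ j ∈ Finset.range (k + 1), ∫ y in U, ‖iteratedFDeriv ℝ j g y‖ ^ 2 ∂μ)
  rw [mul_assoc, ← ENNReal.ofReal_le_ofReal_iff (by positivity), ofReal_norm]
  calc ‖g x‖ₑ ≤ C * eLpNorm (jetENorm k g) 2 (μ.restrict U) := hC U hU g hg x hx
    _ ≤ ENNReal.ofReal (C + 1) * ENNReal.ofReal ((k + 1) * S) := by
        gcongr
        · rw [← ENNReal.ofReal_coe_nnreal]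
          exact ENNReal.ofReal_le_ofReal (by linarith)
        · exact eLpNorm_two_jetENorm_le hU hg hL2
    _ = ENNReal.ofReal ((C + 1) * ((k + 1) * S)) := (ENNReal.ofReal_mul (by positivity)).symm

theorem exists_lipschitzWith_of_integrable_sq_iteratedFDeriv {k : ℕ} (hk : finrank ℝ E < 2 * k)
    {M : E → F} (hM : ContDiff ℝ (k + 1 : ℕ) M)
    (hL2 : ∀ j ≤ k, Integrable (fun y ↦ ‖iteratedFDeriv ℝ (j + 1) M y‖ ^ 2) μ) :
    ∃ K : ℝ≥0, LipschitzWith K M := by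
  have ball_pos : μ (Metric.ball 0 1) ≠ 0 := (Metric.measure_ball_pos μ 0 one_pos).ne'
  obtain ⟨C, -, hC⟩ := exists_norm_le_mul_sqrt_sum_integral_sq (F := E →L[ℝ] F) hk
    measurableSet_ball Metric.isBounded_ball ball_pos
  have hfderiv : ContDiff ℝ k (fderiv ℝ M) := hM.fderiv_right (by norm_cast)
  set S : ℝ :=
    √(∑ j ∈ Finset.range (k + 1), ∫ y in univ, ‖iteratedFDeriv ℝ j (fderiv ℝ M) y‖ ^ 2 ∂μ)
  have hbound (y : E) : ‖fderiv ℝ M y‖ ≤ C * S :=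
    hC univ isOpen_univ (fderiv ℝ M) hfderiv.contDiffOn
      (fun j hj ↦ by simpa only [norm_iteratedFDeriv_fderiv, integrableOn_univ] using hL2 j hj)
      y (subset_univ _)
  refine ⟨(C * S).toNNReal, lipschitzWith_of_nnnorm_fderiv_le (hM.differentiable (by simp)) ?_⟩
  exact fun y ↦ NNReal.le_toNNReal_of_coe_le (hbound y)

end Sobolev

section Epigraph

variable {P : E →L[ℝ] G} {ℓ : E →L[ℝ] ℝ} {M : G → ℝ} {K : ℝ≥0}

lemma lt_apply_add_smul_of_lipschitzWith (hM : LipschitzWith K M) {x v : E} (hx : M (P x) < ℓ x)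
    (hv : K * ‖P v‖ ≤ ℓ v) {t : ℝ} (ht : 0 ≤ t) : M (P (x + t • v)) < ℓ (x + t • v) := by
  have lipschitz_bound : M (P (x + t • v)) - M (P x) ≤ t * (K * ‖P v‖) := by
    calc M (P (x + t • v)) - M (P x) ≤ K * ‖P (x + t • v) - P x‖ :=
          (le_abs_self _).trans (hM.norm_sub_le _ _)
      _ = t * (K * ‖P v‖) := by
          rw [map_add, add_sub_cancel_left, map_smul, norm_smul, Real.norm_of_nonneg ht]
          ring
  rw [map_add ℓ, map_smul ℓ, smul_eq_mul]
  linarith [mul_le_mul_of_nonneg_left hv ht]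

lemma exists_isOpen_truncatedCone_subset_epigraph (hM : LipschitzWith K M) {e : E}
    (he_ker : P e = 0) (he_pos : 0 < ℓ e) :
    ∃ D : Set E, IsOpen D ∧ D.Nonempty ∧ Bornology.IsBounded D ∧
      ∀ x, M (P x) < ℓ x → truncatedCone x D ⊆ {y | M (P y) < ℓ y} := by
  refine ⟨{v | K * ‖P v‖ < ℓ v} ∩ Metric.ball 0 (‖e‖ + 1),
    (isOpen_lt (by fun_prop) (by fun_prop)).inter Metric.isOpen_ball,
    ⟨e, by simpa [he_ker] using he_pos, by simp⟩, Metric.isBounded_ball.subset inter_subset_right,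
    fun x hx ↦ image2_subset_iff.2 fun t ht v hv ↦
      lt_apply_add_smul_of_lipschitzWith hM hx hv.1.le ht.1⟩

end Epigraph

end Cone

theorem sobolev_Linfty_embedding_general {E G F : Type*} [NormedAddCommGroup E] [NormedSpace ℝ E]
    [FiniteDimensional ℝ E] [MeasurableSpace E] [BorelSpace E] [NormedAddCommGroup G]
    [NormedSpace ℝ G] [NormedAddCommGroup F] [NormedSpace ℝ F] [CompleteSpace F]
    (μ : Measure E) [μ.IsAddHaarMeasure] {k : ℕ} (hk : finrank ℝ E < 2 * k) {P : E →L[ℝ] G}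
    {ℓ : E →L[ℝ] ℝ} {e : E} (he_ker : P e = 0) (he_pos : 0 < ℓ e) {M : G → ℝ} {K : ℝ≥0}
    (hM : LipschitzWith K M) :
    ∃ C : ℝ, 0 < C ∧ ∀ g : E → F, ContDiffOn ℝ k g {x | M (P x) < ℓ x} →
      (∀ j ≤ k, IntegrableOn (fun x ↦ ‖iteratedFDeriv ℝ j g x‖ ^ 2) {x | M (P x) < ℓ x} μ) →
      ∀ x, M (P x) < ℓ x → ‖g x‖ ≤ C * √(∑ j ∈ Finset.range (k + 1),
        ∫ y in {x | M (P x) < ℓ x}, ‖iteratedFDeriv ℝ j g y‖ ^ 2 ∂μ) := by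
  obtain ⟨D, hD_open, hD_nonempty, hD_bdd, hcone⟩ :=
    exists_isOpen_truncatedCone_subset_epigraph hM he_ker he_pos
  obtain ⟨C, hC_pos, hC⟩ := exists_norm_le_mul_sqrt_sum_integral_sq (F := F) hk
    hD_open.measurableSet hD_bdd (hD_open.measure_pos μ hD_nonempty).ne'
  have epigraph_open : IsOpen {x | M (P x) < ℓ x} :=
    isOpen_lt (hM.continuous.comp P.continuous) ℓ.continuous
  exact ⟨C, hC_pos, fun g hg hL2 x hx ↦ hC _ epigraph_open g hg hL2 x (hcone x hx)⟩

/-- `proj2` bundled as a continuous linear map, so that `Omg M` has the form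
`{x | M (P x) < ℓ x}` for linear `P` and `ℓ`. -/
def tangentialProj : E3 →L[ℝ] E2 :=
  LinearMap.toContinuousLinearMap
    { toFun := proj2
      map_add' := fun x y ↦ by ext i; fin_cases i <;> simp [proj2]
      map_smul' := fun c x ↦ by ext i; fin_cases i <;> simp [proj2] }

lemma tangentialProj_single_zero (a : ℝ) : tangentialProj (EuclideanSpace.single 0 a) = 0 := by
  ext i
  fin_cases i <;> simp [tangentialProj, proj2]

theorem sobolev_Linfty_embedding (M : E2 → ℝ) (hM : ContDiff ℝ (⊤ : ℕ∞) M)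
    (hMint : ∀ j ≤ 9, Integrable fun x' : E2 => ‖iteratedFDeriv ℝ j M x'‖ ^ 2) :
    ∃ C : ℝ, 0 < C ∧
      ∀ g : E3 → ℝ, ContDiffOn ℝ 2 g (closure (Omg M)) →
        (∀ j ≤ 2, IntegrableOn (fun x => ‖iteratedFDeriv ℝ j g x‖ ^ 2) (Omg M)) →
        ∀ x ∈ Omg M,
          |g x| ≤ C * Real.sqrt
            (∑ j ∈ Finset.range 3, ∫ y in Omg M, ‖iteratedFDeriv ℝ j g y‖ ^ 2) := by
  obtain ⟨K, hK⟩ := exists_lipschitzWith_of_integrable_sq_iteratedFDeriv (k := 2) (by simp)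
    (hM.of_le (WithTop.coe_le_coe.2 le_top)) fun j hj ↦ hMint (j + 1) (by lia)
  obtain ⟨C, hC, hbound⟩ := sobolev_Linfty_embedding_general (F := ℝ) volume (k := 2) (by simp)
    (tangentialProj_single_zero 1) (ℓ := EuclideanSpace.proj 0) (by simp) hK
  exact ⟨C, hC, fun g hg ↦ hbound g (hg.mono subset_closure)⟩
end
end
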